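/- arXiv:1207.0436 — 3 statements merged into one kernel-verified Lean document; each statement's English description precedes it below -/
import Mathlib

section
/- Let P and Q be two probability mass functions on a finite set 𝒳 such that the L₁ norm of their difference satisfies ||P − Q||₁ = Σ_{x∈𝒳} |P(x) − Q(x)| ≤ 1/2. Then the difference between their entropies satisfies |H(P) − H(Q)| ≤ −||P − Q||₁ · log(||P − Q||₁ / |𝒳|). -/
open Real

lemma aux_one_sub {d : ℝ} (h0 : 0 ≤ d) (h1 : d ≤ 1 / 2) : negMulLog (1 - d) ≤ negMulLog d := by
  rcases h0.eq_or_lt with rfl | hd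
  · simp
  have h1d : 0 < 1 - d := by linarith
  have m1 : 1 / (1 - d) ∈ Set.Ioi (0 : ℝ) := Set.mem_Ioi.2 (by positivity)
  have m2 : d / (1 - d) ∈ Set.Ioi (0 : ℝ) := Set.mem_Ioi.2 (by positivity)
  have w1 : 0 ≤ (1 - 2 * d) / (1 - d) := div_nonneg (by linarith) h1d.le
  have w2 : 0 ≤ d / (1 - d) := by positivity
  have hJ := strictConcaveOn_log_Ioi.concaveOn.2 m1 m2 w1 w2 (by field_simp; ring)
  have e : (1 - 2 * d) / (1 - d) * (1 / (1 - d)) + d / (1 - d) * (d / (1 - d)) = 1 := by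
    field_simp; ring
  simp only [smul_eq_mul] at hJ
  rw [e, log_one, log_div one_ne_zero h1d.ne', log_div hd.ne' h1d.ne', log_one] at hJ
  have e2 : (1 - 2 * d) / (1 - d) * (0 - log (1 - d)) + d / (1 - d) * (log d - log (1 - d))
      = (d * log d - (1 - d) * log (1 - d)) / (1 - d) := by
    field_simp; ring
  rw [e2] at hJ
  have := mul_nonpos_of_nonneg_of_nonpos h1d.le hJ
  rw [mul_div_cancel₀ _ h1d.ne'] at this
  simp only [negMulLog]
  linarith

lemma aux_pair {a d : ℝ} (ha : 0 ≤ a) (hd : 0 ≤ d) (h1 : a + d ≤ 1) (h2 : d ≤ 1 / 2) :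
    |negMulLog (a + d) - negMulLog a| ≤ negMulLog d := by
  rcases hd.eq_or_lt with rfl | hd'
  · simp
  have hs : 0 < 1 - a := by linarith
  rw [abs_le]
  constructor
  · have hle : 0 ≤ 1 - d / (1 - a) := by
      rw [sub_nonneg, div_le_one hs]; linarith
    have hnn : 0 ≤ d / (1 - a) := by positivity
    have A := concaveOn_negMulLog.2 (Set.mem_Ici.2 ha)
      (Set.mem_Ici.2 (zero_le_one (α := ℝ))) hle hnn (by ring)
    have B := concaveOn_negMulLog.2 (Set.mem_Ici.2 ha)
      (Set.mem_Ici.2 (zero_le_one (α := ℝ))) hnn hle (by ring)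
    simp only [smul_eq_mul, negMulLog_one] at A B
    rw [show (1 - d / (1 - a)) * a + d / (1 - a) * 1 = a + d by field_simp; ring] at A
    rw [show d / (1 - a) * a + (1 - d / (1 - a)) * 1 = 1 - d by field_simp; ring] at B
    have := aux_one_sub hd h2
    linarith
  · rcases ha.eq_or_lt with rfl | ha'
    · simp
    have l1 := log_le_log ha' (show a ≤ a + d by linarith)
    have l2 := log_le_log hd' (show d ≤ a + d by linarith)
    simp only [negMulLog]
    nlinarith [mul_le_mul_of_nonneg_left l1 ha, mul_le_mul_of_nonneg_left l2 hd]

lemma aux_abs {p q : ℝ} (hp : 0 ≤ p) (hq : 0 ≤ q) (hp1 : p ≤ 1) (hq1 : q ≤ 1)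
    (h : |p - q| ≤ 1 / 2) : |negMulLog p - negMulLog q| ≤ negMulLog |p - q| := by
  rcases le_total q p with hqp | hqp
  · have e : |p - q| = p - q := abs_of_nonneg (by linarith)
    rw [e] at h ⊢
    have := aux_pair hq (sub_nonneg.2 hqp) (by linarith) h
    rwa [show q + (p - q) = p by ring] at this
  · rw [abs_sub_comm p q] at h ⊢
    rw [abs_sub_comm (negMulLog p)]
    have e : |q - p| = q - p := abs_of_nonneg (by linarith)
    rw [e] at h ⊢
    have := aux_pair hp (sub_nonneg.2 hqp) (by linarith) h
    rwa [show p + (q - p) = q by ring] at this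

/-- **L₁ bound on the entropy difference** (Cover–Thomas, Theorem 17.3.3).
If `P` and `Q` are probability mass functions on a finite set `𝒳` with
`‖P − Q‖₁ = ∑ x, |P x − Q x| ≤ 1/2`, then
`|H(P) − H(Q)| ≤ −‖P − Q‖₁ · log(‖P − Q‖₁ / |𝒳|)`,
where `H(P) = −∑ x, P x * log (P x)` (natural logarithm). -/
theorem entropy_diff_L1_bound
    {𝒳 : Type*} [Fintype 𝒳] (P Q : 𝒳 → ℝ)
    (hP_nonneg : ∀ x, 0 ≤ P x) (hP_sum : ∑ x, P x = 1)
    (hQ_nonneg : ∀ x, 0 ≤ Q x) (hQ_sum : ∑ x, Q x = 1)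
    (hL1 : ∑ x, |P x - Q x| ≤ 1 / 2) :
    |(∑ x, Real.negMulLog (P x)) - ∑ x, Real.negMulLog (Q x)|
      ≤ -(∑ x, |P x - Q x|) * Real.log ((∑ x, |P x - Q x|) / (Fintype.card 𝒳)) := by
  have hne : Nonempty 𝒳 := by
    by_contra hc
    rw [not_nonempty_iff] at hc
    simp at hP_sum
  have hn : (0 : ℝ) < Fintype.card 𝒳 := by exact_mod_cast Fintype.card_pos
  have hP1 : ∀ x, P x ≤ 1 := fun x => hP_sum ▸
    Finset.single_le_sum (fun i _ => hP_nonneg i) (Finset.mem_univ x)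
  have hQ1 : ∀ x, Q x ≤ 1 := fun x => hQ_sum ▸
    Finset.single_le_sum (fun i _ => hQ_nonneg i) (Finset.mem_univ x)
  have hd : ∀ x, |P x - Q x| ≤ 1 / 2 := fun x =>
    (Finset.single_le_sum (f := fun i => |P i - Q i|) (fun i _ => abs_nonneg _)
      (Finset.mem_univ x)).trans hL1
  have h1 : |(∑ x, negMulLog (P x)) - ∑ x, negMulLog (Q x)| ≤ ∑ x, negMulLog |P x - Q x| := by
    rw [← Finset.sum_sub_distrib]
    exact (Finset.abs_sum_le_sum_abs _ _).trans (Finset.sum_le_sum fun x _ =>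
      aux_abs (hP_nonneg x) (hQ_nonneg x) (hP1 x) (hQ1 x) (hd x))
  refine h1.trans ?_
  have hJ := concaveOn_negMulLog.le_map_sum (t := Finset.univ)
    (w := fun _ : 𝒳 => (1 : ℝ) / Fintype.card 𝒳) (p := fun x => |P x - Q x|)
    (fun _ _ => by positivity) (by simp [hn.ne']) (fun x _ => Set.mem_Ici.2 (abs_nonneg _))
  simp only [smul_eq_mul, ← Finset.mul_sum] at hJ
  have := mul_le_mul_of_nonneg_left hJ hn.le
  rw [← mul_assoc, mul_one_div_cancel hn.ne', one_mul] at this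
  refine this.trans (le_of_eq ?_)
  rw [one_div_mul_eq_div]
  simp only [negMulLog]
  field_simp
end

section
/- For every λ > 0, the entropy of the Binomial(n, λ/n) distribution converges, as n → ∞, to the entropy of the Poisson distribution with mean λ: lim_{n→∞} H(Binomial(n, λ/n)) = H(Po(λ)). -/
open Real Filter

/-- The Poisson probability mass function with mean `lam`. -/
noncomputable def poissonPMF (lam : ℝ) (k : ℕ) : ℝ :=
  Real.exp (-lam) * lam ^ k / (Nat.factorial k)

/-- The Binomial(n, p) probability mass function (it vanishes for `k > n`). -/
noncomputable def binomialPMF (n : ℕ) (p : ℝ) (k : ℕ) : ℝ :=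
  (n.choose k : ℝ) * p ^ k * (1 - p) ^ (n - k)

/-- The entropy (in nats) of a pmf on the non-negative integers. -/
noncomputable def entropyPMF (p : ℕ → ℝ) : ℝ := ∑' k, Real.negMulLog (p k)

lemma negMulLog_bound_aux (x b c : ℝ) (h0 : 0 ≤ x) (h1 : x ≤ 1) (hb : x ≤ b) (hc : 0 < c) :
    ‖Real.negMulLog x‖ ≤ c * b + c⁻¹ := by
  rw [Real.norm_of_nonneg (Real.negMulLog_nonneg h0 h1)]
  obtain ⟨s, hs0, rfl⟩ : ∃ s : ℝ, 0 ≤ s ∧ x = s * s :=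
    ⟨√x, Real.sqrt_nonneg x, (Real.mul_self_sqrt h0).symm⟩
  have h2 : Real.negMulLog s ≤ 1 - s := Real.negMulLog_le_one_sub_self hs0
  rw [Real.negMulLog_mul]
  have h3 : s * Real.negMulLog s ≤ s := by nlinarith
  have h4 : c * (s * s) ≤ c * b := mul_le_mul_of_nonneg_left hb hc.le
  have h5 : 2 * s ≤ c * (s * s) + c⁻¹ := by
    have h6 : 0 ≤ c⁻¹ * (c * s - 1) ^ 2 := by positivity
    have h7 : c⁻¹ * (c * s - 1) ^ 2 = c * (s * s) + c⁻¹ - 2 * s := by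
      field_simp
      ring
    linarith
  linarith

/-- For every `λ > 0`, the entropy of the `Binomial(n, λ/n)` distribution converges,
as `n → ∞`, to the entropy of the Poisson distribution with mean `λ`. -/
theorem entropy_binomial_tendsto_entropy_poisson
    (lam : ℝ) (hlam_pos : 0 < lam) :
    Tendsto (fun n : ℕ => entropyPMF (binomialPMF n (lam / n))) atTop
      (nhds (entropyPMF (poissonPMF lam))) := by
  unfold entropyPMF
  refine tendsto_tsum_of_dominated_convergence
    (bound := fun k : ℕ => (2 : ℝ) ^ k * (lam ^ k / k.factorial) + ((2 : ℝ) ^ k)⁻¹) ?_ ?_ ?_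
  · refine Summable.add ?_ ?_
    · refine (Real.summable_pow_div_factorial (2 * lam)).congr fun k => ?_
      rw [mul_pow, mul_div_assoc]
    · refine (summable_geometric_two).congr fun k => ?_
      simp
  · intro k
    refine (Real.continuous_negMulLog.tendsto _).comp ?_
    refine ProbabilityTheory.tendsto_choose_mul_pow_of_tendsto_mul_atTop k ?_
    refine tendsto_const_nhds.congr' ?_
    filter_upwards [eventually_ge_atTop 1] with n hn
    have : (n : ℝ) ≠ 0 := by positivity
    field_simp
  · filter_upwards [eventually_ge_atTop 1, eventually_ge_atTop ⌈lam⌉₊] with n hn hl k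
    have hn0 : (0 : ℝ) < n := by exact_mod_cast hn
    have hl' : lam ≤ n := Nat.ceil_le.mp hl
    have hp0 : 0 ≤ lam / n := by positivity
    have hp1 : lam / n ≤ 1 := (div_le_one hn0).mpr hl'
    have hq0 : 0 ≤ 1 - lam / n := by linarith
    have hnn : ∀ j, 0 ≤ binomialPMF n (lam / n) j := fun j => by
      unfold binomialPMF
      positivity
    apply negMulLog_bound_aux _ _ _ (hnn k) _ _ (by positivity)
    · by_cases hk : k ≤ n
      · have hsum : ∑ j ∈ Finset.range (n + 1), binomialPMF n (lam / n) j = 1 := by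
          have h := add_pow (lam / n) (1 - lam / n) n
          rw [add_sub_cancel, one_pow] at h
          rw [h]
          refine Finset.sum_congr rfl fun j _ => ?_
          unfold binomialPMF
          ring
        rw [← hsum]
        exact Finset.single_le_sum (fun j _ => hnn j) (Finset.mem_range.mpr (by omega))
      · simp [binomialPMF, Nat.choose_eq_zero_of_lt (not_le.mp hk)]
    · unfold binomialPMF
      have h1 : (n.choose k : ℝ) ≤ (n : ℝ) ^ k / k.factorial := Nat.choose_le_pow_div k n
      calc (n.choose k : ℝ) * (lam / n) ^ k * (1 - lam / n) ^ (n - k)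
          ≤ (n.choose k : ℝ) * (lam / n) ^ k * 1 := by
            refine mul_le_mul_of_nonneg_left ?_ (by positivity)
            exact pow_le_one₀ hq0 (by linarith)
        _ ≤ (n : ℝ) ^ k / k.factorial * (lam / n) ^ k * 1 := by gcongr
        _ = lam ^ k / k.factorial := by
            rw [div_pow]
            field_simp
end

section
/- (Main theorem: Poisson approximation of the entropy of dependent Bernoulli sums) Let I be a finite index set with m = |I|, and for each α ∈ I let X_α be a Bernoulli random variable with p_α = P(X_α = 1) > 0. Let W = Σ_{α∈I} X_α and λ = Σ_{α∈I} p_α ∈ (0, ∞). For each α ∈ I let B_α ⊆ I with α ∈ B_α, and define b_1 = Σ_{α∈I} Σ_{β∈B_α} p_α p_β, b_2 = Σ_{α∈I} Σ_{β∈B_α, β≠α} E[X_α X_β], b_3 = Σ_{α∈I} E| E[X_α − p_α | σ({X_β : β ∈ I \ B_α})] |. Define a(λ) = 2[(b_1 + b_2)(1 − e^{−λ})/λ + b_3 · min{1, 1.4/√λ}] and b(λ) = [max{λ log(e/λ), 0} + λ² + (6 log(2π) + 1)/12] · exp{−[λ + (m−1) log((m−1)/(λe))]}. Let Z ∼ Po(λ).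 If a(λ) ≤ 1/2 and λ ≤ m − 1, then the difference between the entropies (to the base e) of Z and W satisfies |H(Z) − H(W)| ≤ a(λ) log((m + 2)/a(λ)) + b(λ). -/
open MeasureTheory ProbabilityTheory Real

/-- The pmf of an (integer-valued) real random variable `W` under `μ`. -/
noncomputable def pmfOf {Ω : Type*} [MeasurableSpace Ω] (μ : Measure Ω) (W : Ω → ℝ) (k : ℕ) : ℝ :=
  (μ {ω | W ω = k}).toReal

/-- `X` is a Bernoulli random variable with parameter `p` under `μ`:
it takes values `0` and `1`, and `P(X = 1) = p`. -/
def IsBernoulli {Ω : Type*} [MeasurableSpace Ω] (μ : Measure Ω) (X : Ω → ℝ) (p : ℝ) : Prop :=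
  Measurable X ∧ (∀ ω, X ω = 0 ∨ X ω = 1) ∧ μ {ω | X ω = 1} = ENNReal.ofReal p

/-- The σ-algebra generated by the family of random variables `{X β : β ∉ B}`. -/
noncomputable def genOutside {Ω ι : Type*} [MeasurableSpace Ω]
    (X : ι → Ω → ℝ) (B : Set ι) : MeasurableSpace Ω :=
  MeasurableSpace.comap (fun ω => fun β : ((Set.univ \ B : Set ι)) => X β ω) inferInstance


/-- abstract Poisson weights -/
structure PoiW (lam : ℝ) (q : ℕ → ℝ) : Prop where
  lam_pos : 0 < lam
  pos : ∀ k, 0 < q k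
  hasSum : HasSum q 1
  recq : ∀ k : ℕ, ((k : ℝ) + 1) * q (k + 1) = lam * q k

namespace PoiW
variable {lam : ℝ} {q : ℕ → ℝ}

/-- head -/
noncomputable def S (q : ℕ → ℝ) (j : ℕ) : ℝ := ∑ k ∈ Finset.range j, q k

theorem S_succ (j : ℕ) : S q (j + 1) = S q j + q j := by
  simp [S, Finset.sum_range_succ]

theorem S_nonneg (H : PoiW lam q) (j : ℕ) : 0 ≤ S q j :=
  Finset.sum_nonneg (fun k _ => (H.pos k).le)

theorem hasSum_tail (H : PoiW lam q) (j : ℕ) : HasSum (fun k => q (k + j)) (1 - S q j) := by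
  have := (hasSum_nat_add_iff' (f := q) (g := 1) j).2 H.hasSum
  simpa [S] using this

theorem S_le_one (H : PoiW lam q) (j : ℕ) : S q j ≤ 1 := by
  have := (H.hasSum_tail j).nonneg (fun k => (H.pos _).le)
  linarith

/-- ratio inequality -/
theorem ratio (H : PoiW lam q) {k J : ℕ} (h : k ≤ J) : q k * q (J + 1) ≤ q (k + 1) * q J := by
  have h1 := H.recq k
  have h2 := H.recq J
  have hk : (0 : ℝ) < (k : ℝ) + 1 := by positivity
  have hJ : (0 : ℝ) < (J : ℝ) + 1 := by positivity
  have e1 : q (k + 1) = lam * q k / ((k : ℝ) + 1) := by field_simp; linarith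
  have e2 : q (J + 1) = lam * q J / ((J : ℝ) + 1) := by field_simp; linarith
  rw [e1, e2]
  have hc : (k : ℝ) ≤ J := by exact_mod_cast h
  have : lam * q k * q J / ((J : ℝ) + 1) ≤ lam * q k * q J / ((k : ℝ) + 1) := by
    have := H.pos k
    have := H.pos J
    have := H.lam_pos
    gcongr
  calc _ = lam * q k * q J / ((J : ℝ) + 1) := by ring
    _ ≤ _ := this
    _ = _ := by ring

theorem head_ineq (H : PoiW lam q) (J : ℕ) :
    S q (J + 1) * q (J + 1) ≤ q J * (S q (J + 2) - q 0) := by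
  have : S q (J + 2) - q 0 = ∑ k ∈ Finset.range (J + 1), q (k + 1) := by
    rw [S, Finset.sum_range_succ']; ring
  rw [this, S, Finset.sum_mul, Finset.mul_sum]
  apply Finset.sum_le_sum
  intro k hk
  have := H.ratio (k := k) (J := J) (by simp at hk; omega)
  linarith

theorem tail_ineq (H : PoiW lam q) (J : ℕ) :
    (1 - S q (J + 2)) * q J ≤ (1 - S q (J + 1)) * q (J + 1) := by
  refine hasSum_le ?_ ((H.hasSum_tail (J + 2)).mul_right _) ((H.hasSum_tail (J + 1)).mul_right _)
  intro k
  have := H.ratio (k := J) (J := k + (J + 1)) (by omega)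
  rw [show k + (J + 1) + 1 = k + (J + 2) by ring] at this
  linarith

theorem head_mean (H : PoiW lam q) (j : ℕ) : lam * S q j ≤ j * S q (j + 1) := by
  have h0 : ∑ k ∈ Finset.range j, q (k + 1) ≤ S q (j + 1) := by
    rw [S, Finset.sum_range_succ']
    have := H.pos 0
    linarith
  refine le_trans ?_ (mul_le_mul_of_nonneg_left h0 (Nat.cast_nonneg j))
  rw [S, Finset.mul_sum, Finset.mul_sum]
  apply Finset.sum_le_sum
  intro k hk
  rw [← H.recq]
  have := H.pos (k + 1)
  have : (k : ℝ) + 1 ≤ j := by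
    simp at hk
    exact_mod_cast hk
  gcongr

theorem tail_mean (H : PoiW lam q) (j : ℕ) :
    ((j : ℝ) + 1) * (1 - S q (j + 1)) ≤ lam * (1 - S q j) := by
  refine hasSum_le ?_ ((H.hasSum_tail (j + 1)).mul_left _) ((H.hasSum_tail j).mul_left _)
  intro k
  rw [← H.recq, show k + (j + 1) = k + j + 1 by ring]
  have := H.pos (k + j + 1)
  push_cast
  have : (0 : ℝ) ≤ k := by positivity
  gcongr
  linarith

theorem SR_le (H : PoiW lam q) (j : ℕ) : S q (j + 1) * (1 - S q (j + 1)) ≤ lam * q j := by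
  have h1 := H.head_mean j
  have h2 := H.tail_mean j
  have h3 := H.S_nonneg (j + 1)
  have h4 := H.S_le_one (j + 1)
  have h5 := S_succ (q := q) j
  have h6 := mul_le_mul_of_nonneg_left h2 h3
  have h7 := mul_le_mul_of_nonneg_right h1 (sub_nonneg.2 h4)
  have h8 : S q j = S q (j + 1) - q j := by linarith
  rw [h8] at h6 h7
  nlinarith

theorem SR_le_sqrt (H : PoiW lam q) (hq : ∀ k, q k = Real.exp (-lam) * lam ^ k / (Nat.factorial k))
    (j : ℕ) : S q (j + 1) * (1 - S q (j + 1)) ≤ (7/5) * √lam * q j := by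
  have h3 := H.S_nonneg (j + 1)
  have h4 := H.S_le_one (j + 1)
  have hs : 0 < √lam := Real.sqrt_pos.2 H.lam_pos
  have hss : √lam * √lam = lam := Real.mul_self_sqrt H.lam_pos.le
  set s := √lam with hsdef
  have hqj := H.pos j
  by_cases c0 : s ≤ (7/5)
  · have := H.SR_le j
    nlinarith [mul_pos hs hqj, mul_nonneg (mul_pos hs hqj).le (sub_nonneg.2 c0)]
  have h5 := S_succ (q := q) j
  by_cases c1 : s * (5/7) ≤ j + 1 - lam
  · have h2 := H.tail_mean j
    have hR : (1 - S q (j + 1)) * (s * (5/7)) ≤ lam * q j := by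
      have := mul_le_mul_of_nonneg_left c1 (sub_nonneg.2 h4)
      nlinarith
    have hR' : (1 - S q (j + 1)) ≤ (7/5) * s * q j := by
      have : (1 - S q (j + 1)) * s ≤ ((7/5) * s * q j) * s := by
        rw [← hss] at hR
        linarith
      exact le_of_mul_le_mul_right this hs
    nlinarith
  by_cases c2 : s * (5/7) ≤ lam - j
  · have h2 := H.head_mean j
    have hR : (S q (j + 1)) * (s * (5/7)) ≤ lam * q j := by
      have := mul_le_mul_of_nonneg_left c2 h3
      nlinarith
    have hR' : (S q (j + 1)) ≤ (7/5) * s * q j := by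
      have : (S q (j + 1)) * s ≤ ((7/5) * s * q j) * s := by
        rw [← hss] at hR
        linarith
      exact le_of_mul_le_mul_right this hs
    nlinarith
  push Not at c0 c1 c2
  have hj : j ≠ 0 := by
    rintro rfl
    norm_num at c2
    nlinarith
  have hj0 : (0 : ℝ) < j := by positivity
  -- Stirling
  obtain ⟨i, rfl⟩ := Nat.exists_eq_succ_of_ne_zero hj
  have st : Stirling.stirlingSeq (i + 1) ≤ Stirling.stirlingSeq 1 := by
    exact Stirling.stirlingSeq'_antitone (Nat.zero_le i)
  rw [Stirling.stirlingSeq_one, Stirling.stirlingSeq] at st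
  set j := i + 1 with hjdef
  change s * (5/7) > lam - j at c2
  change (j:ℝ) + 1 - lam < s * (5/7) at c1
  have hJ0 : (0 : ℝ) < j := by positivity
  have hfact : ((Nat.factorial j : ℕ) : ℝ) ≤ Real.exp 1 * √j * ((j : ℝ) / Real.exp 1) ^ j := by
    rw [div_le_div_iff₀ (by positivity) (by positivity)] at st
    rw [Real.sqrt_mul (by norm_num)] at st
    have h2 : (0:ℝ) < √2 := by positivity
    have := le_of_mul_le_mul_right (a := √2) (b := (Nat.factorial j : ℝ)) (c := Real.exp 1 * √j * ((j : ℝ) / Real.exp 1) ^ j) (by linarith) h2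
    exact this
  have hlow : Real.exp (-(52/100)) ≤ Real.exp (-lam) * lam ^ j / ((j : ℝ) / Real.exp 1) ^ j := by
    have e : Real.exp (-lam) * lam ^ j / ((j : ℝ) / Real.exp 1) ^ j
        = Real.exp (-lam + j * (Real.log (lam / j) + 1)) := by
      rw [Real.exp_add, mul_div_assoc, ← div_pow, mul_comm (j : ℝ), Real.exp_mul, Real.exp_add,
        Real.exp_log (div_pos H.lam_pos hJ0), Real.rpow_natCast]
      congr 2
      field_simp
    rw [e]
    apply Real.exp_le_exp.2
    have l1 : 1 - (lam / j)⁻¹ ≤ Real.log (lam / j) :=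
      Real.one_sub_inv_le_log_of_pos (div_pos H.lam_pos hJ0)
    have l2 := mul_le_mul_of_nonneg_left l1 hJ0.le
    have l3 : (j : ℝ) * (1 - (lam / j)⁻¹) = j - j ^ 2 / lam := by
      have := H.lam_pos
      field_simp
    have l4 : (j : ℝ) ^ 2 / lam ≤ 2 * j - lam + 52 / 100 := by
      rw [div_le_iff₀ H.lam_pos]
      have : (lam - j) ^ 2 ≤ (s * (5/7)) ^ 2 := sq_le_sq' (by linarith) (by linarith)
      have h9 : (s * (5/7)) ^ 2 ≤ (25/49) * lam := by
        have := H.lam_pos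
        rw [← hss]
        nlinarith
      have h10 : (lam - j) ^ 2 ≤ (25/49) * lam := le_trans this h9
      nlinarith [H.lam_pos]
    linarith
  have hsj : √(j : ℝ) ≤ 107 / 100 * s := by
    rw [Real.sqrt_le_left (by positivity)]
    nlinarith [sq_nonneg (s - 2.8)]
  have hsj0 : 0 < √(j : ℝ) := Real.sqrt_pos.2 hJ0
  have hexp : (54 : ℝ) / 100 ≤ Real.exp (-(52 / 100)) := by
    have h1 : (74 : ℝ) / 100 ≤ Real.exp (-(26 / 100)) := by
      have := Real.add_one_le_exp (-(26 / 100 : ℝ))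
      linarith
    have h2 : Real.exp (-(52 / 100)) = Real.exp (-(26 / 100)) * Real.exp (-(26 / 100)) := by
      rw [← Real.exp_add]; norm_num
    rw [h2]
    nlinarith
  have he : Real.exp 1 < 2.7182818286 := Real.exp_one_lt_d9
  have hqlow : 1 ≤ q j * (Real.exp 1 * √j) / Real.exp (-(52/100)) := by
    rw [hq j, le_div_iff₀ (Real.exp_pos _), one_mul]
    refine hlow.trans ?_
    have hpw : 0 < ((j : ℝ) / Real.exp 1) ^ j := by positivity
    have hf : (0 : ℝ) < (Nat.factorial j : ℝ) := by positivity
    rw [div_le_iff₀ hpw, div_mul_eq_mul_div, div_mul_eq_mul_div, le_div_iff₀ hf]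
    have : 0 < Real.exp (-lam) * lam ^ j := by have := H.lam_pos; positivity
    calc _ ≤ Real.exp (-lam) * lam ^ j * (Real.exp 1 * √j * ((j : ℝ) / Real.exp 1) ^ j) := by gcongr
      _ = _ := by ring
  rw [le_div_iff₀ (Real.exp_pos _), one_mul] at hqlow
  have hqj' : 0 < q j := hqj
  have h11 : q j * (Real.exp 1 * √j) ≤ q j * (2.7182818286 * (107 / 100 * s)) := by
    gcongr
  have h12 : (1 : ℝ) / 4 ≤ 7 / 5 * s * q j := by
    have : 0 < q j * s := mul_pos hqj' hs
    nlinarith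
  change S q (j + 1) * (1 - S q (j + 1)) ≤ 7 / 5 * s * q j
  nlinarith [sq_nonneg (S q (j + 1) - 1 / 2)]

/-- Stein solution numerator. -/
noncomputable def F (q h : ℕ → ℝ) (c : ℝ) (j : ℕ) : ℝ := ∑ k ∈ Finset.range j, (h k - c) * q k

/-- Stein solution. -/
noncomputable def f (q h : ℕ → ℝ) (c : ℝ) (j : ℕ) : ℝ := F q h c j / (j * q j)

theorem stein_eq (H : PoiW lam q) (h : ℕ → ℝ) (c : ℝ) (j : ℕ) :
    lam * f q h c (j + 1) - j * f q h c j = h j - c := by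
  have hq := H.pos j
  have h1 : lam * f q h c (j + 1) = F q h c (j + 1) / q j := by
    have := H.recq j
    have hl := H.lam_pos
    unfold f
    push_cast
    rw [this]
    field_simp
  have h2 : j * f q h c j = F q h c j / q j := by
    unfold f
    rcases Nat.eq_zero_or_pos j with rfl | hj
    · simp [F]
    · field_simp
  rw [h1, h2, F, Finset.sum_range_succ, ← F]
  field_simp
  ring

section bounds
variable {h : ℕ → ℝ} {c : ℝ}

theorem aux_h (H : PoiW lam q) (h0 : ∀ k, 0 ≤ h k) (h1 : ∀ k, h k ≤ 1)
    (hc : HasSum (fun k => h k * q k) c) (j : ℕ) :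
    ∃ u v, u + v = c ∧ u = ∑ k ∈ Finset.range j, h k * q k ∧ 0 ≤ u ∧ u ≤ S q j ∧ 0 ≤ v ∧ v ≤ 1 - S q j
      ∧ F q h c j = u * (1 - S q j) - v * S q j := by
  have hle : ∀ k, h k * q k ≤ q k := fun k => by nlinarith [h1 k, H.pos k]
  have hge : ∀ k, 0 ≤ h k * q k := fun k => mul_nonneg (h0 k) (H.pos k).le
  refine ⟨∑ k ∈ Finset.range j, h k * q k, c - ∑ k ∈ Finset.range j, h k * q k, by ring, rfl,
    Finset.sum_nonneg (fun k _ => hge k), Finset.sum_le_sum (fun k _ => hle k), ?_, ?_, ?_⟩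
  · exact ((hasSum_nat_add_iff' (f := fun k => h k * q k) j).2 hc).nonneg (fun k => hge _)
  · exact hasSum_le (fun k => hle _) ((hasSum_nat_add_iff' (f := fun k => h k * q k) j).2 hc) (H.hasSum_tail j)
  · simp only [F, sub_mul, Finset.sum_sub_distrib, ← Finset.mul_sum]
    simp only [S]; ring

theorem f_succ (H : PoiW lam q) (j : ℕ) : f q h c (j + 1) = F q h c (j + 1) / (lam * q j) := by
  unfold f; rw [← H.recq]; push_cast; rfl

theorem F_bound (H : PoiW lam q) (h0 : ∀ k, 0 ≤ h k) (h1 : ∀ k, h k ≤ 1)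
    (hc : HasSum (fun k => h k * q k) c) (j : ℕ) :
    |F q h c j| ≤ S q j * (1 - S q j) := by
  obtain ⟨u, v, -, -, a1, a2, a3, a4, e⟩ := H.aux_h h0 h1 hc j
  have := H.S_nonneg j
  have := H.S_le_one j
  rw [e, abs_le]
  constructor <;> nlinarith

theorem f_bound (H : PoiW lam q) (hq : ∀ k, q k = Real.exp (-lam) * lam ^ k / (Nat.factorial k))
    (h0 : ∀ k, 0 ≤ h k) (h1 : ∀ k, h k ≤ 1)
    (hc : HasSum (fun k => h k * q k) c) (j : ℕ) :
    |f q h c (j + 1)| ≤ min 1 (1.4 / √lam) := by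
  have hl := mul_pos H.lam_pos (H.pos j)
  have hF := H.F_bound h0 h1 hc (j + 1)
  rw [H.f_succ, abs_div, abs_of_pos hl, le_min_iff]
  constructor
  · rw [div_le_one hl]
    exact hF.trans (H.SR_le j)
  · have hs : 0 < √lam := Real.sqrt_pos.2 H.lam_pos
    have hss : √lam * √lam = lam := Real.mul_self_sqrt H.lam_pos.le
    rw [div_le_div_iff₀ hl hs]
    calc _ ≤ ((7/5) * √lam * q j) * √lam := by
          gcongr
          exact hF.trans (H.SR_le_sqrt hq j)
      _ = 1.4 * ((√lam * √lam) * q j) := by ring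
      _ = _ := by rw [hss]

theorem f_diff (H : PoiW lam q) 
    (h0 : ∀ k, 0 ≤ h k) (h1 : ∀ k, h k ≤ 1)
    (hc : HasSum (fun k => h k * q k) c) (j : ℕ) :
    |f q h c (j + 2) - f q h c (j + 1)| ≤ (1 - q 0) / lam := by
  obtain ⟨u, v, e1, e2, a1, a2, a3, a4, e⟩ := H.aux_h h0 h1 hc (j + 1)
  obtain ⟨u', v', e1', e2', a1', a2', a3', a4', e'⟩ := H.aux_h h0 h1 hc (j + 2)
  have eu : u' = u + h (j + 1) * q (j + 1) := by
    rw [e2', e2, Finset.sum_range_succ]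
  have ev : v = v' + h (j + 1) * q (j + 1) := by linarith
  have hl := H.lam_pos
  have q0 := H.pos j
  have q1 := H.pos (j + 1)
  have i1 := H.head_ineq j
  have i2 := H.tail_ineq j
  have eS := S_succ (q := q) (j + 1)
  have s0 := H.S_nonneg (j + 1)
  have s1 := H.S_le_one (j + 1)
  have s0' := H.S_nonneg (j + 2)
  have s1' := H.S_le_one (j + 2)
  have i3 : S q (j + 1) * q (j + 1) ≤ S q (j + 2) * q j := by nlinarith [H.pos 0]
  rw [show j + 2 = (j + 1) + 1 from rfl, H.f_succ, H.f_succ]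
  rw [show j + 1 + 1 = j + 2 from rfl] at *
  have hd : F q h c (j + 2) / (lam * q (j + 1)) - F q h c (j + 1) / (lam * q j)
      = (F q h c (j + 2) * q j - F q h c (j + 1) * q (j + 1)) / (lam * (q j * q (j + 1))) := by
    field_simp
  rw [hd, abs_div, abs_of_pos (by positivity : 0 < lam * (q j * q (j + 1))),
    div_le_div_iff₀ (by positivity) hl]
  have key : |F q h c (j + 2) * q j - F q h c (j + 1) * q (j + 1)|
      ≤ (1 - q 0) * (q j * q (j + 1)) := by
    have hδ1 : h (j + 1) * q (j + 1) ≤ q (j + 1) := by nlinarith [h1 (j + 1)]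
    have hδ0 : 0 ≤ h (j + 1) * q (j + 1) := mul_nonneg (h0 _) q1.le
    set δ := h (j + 1) * q (j + 1)
    set M := (1 - S q (j + 2)) * q j + S q (j + 1) * q (j + 1) with hM
    have hM1 : M ≤ (1 - q 0) * q j := by rw [hM]; linarith
    have hM0 : 0 ≤ M := by
      have := mul_nonneg (sub_nonneg.2 s1') q0.le
      have := mul_nonneg s0 q1.le
      linarith
    set X := (1 - S q (j + 1)) * q (j + 1) - (1 - S q (j + 2)) * q j with hX
    set Y := S q (j + 2) * q j - S q (j + 1) * q (j + 1) with hY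
    have hX0 : 0 ≤ X := by linarith
    have hY0 : 0 ≤ Y := by linarith
    have eq : F q h c (j + 2) * q j - F q h c (j + 1) * q (j + 1) = - u * X + δ * M - v' * Y := by
      rw [e, e', eu, ev, hM, hX, hY]; ring
    have hMq : q (j + 1) * M ≤ (1 - q 0) * (q j * q (j + 1)) := by nlinarith
    rw [eq, abs_le]
    constructor
    · have b1 : u * X ≤ S q (j + 1) * X := by gcongr
      have b2 : v' * Y ≤ (1 - S q (j + 2)) * Y := by gcongr
      have b3 : S q (j + 1) * X + (1 - S q (j + 2)) * Y = q (j + 1) * M := by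
        rw [hM, hX, hY, eS]; ring
      have b4 : 0 ≤ δ * M := mul_nonneg hδ0 hM0
      linarith
    · have b1 : 0 ≤ u * X := mul_nonneg a1 hX0
      have b2 : 0 ≤ v' * Y := mul_nonneg a3' hY0
      have b4 : δ * M ≤ q (j + 1) * M := by gcongr
      linarith
  calc _ ≤ (1 - q 0) * (q j * q (j + 1)) * lam := by gcongr
    _ = _ := by ring

end bounds

end PoiW

section ent

theorem negMulLog_flip {d : ℝ} (h0 : 0 ≤ d) (h1 : d ≤ 1 / 2) :
    Real.negMulLog (1 - d) ≤ Real.negMulLog d := by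
  rcases h0.eq_or_lt with rfl | hd
  · simp
  have hc := strictConcaveOn_log_Ioi.concaveOn.2 (x := d) (y := 1) hd (by simp : (1:ℝ) ∈ Set.Ioi 0)
    (show 0 ≤ d / (1 - d) from div_nonneg h0 (by linarith))
    (show 0 ≤ 1 - d / (1 - d) by
      rw [sub_nonneg, div_le_one (by linarith)]; linarith) (by ring)
  have e : (d / (1 - d)) • d + (1 - d / (1 - d)) • (1 : ℝ) = 1 - d := by
    have : (1 - d) ≠ 0 := by linarith
    simp only [smul_eq_mul]
    field_simp
    ring
  rw [e] at hc
  simp only [smul_eq_mul, Real.log_one, mul_zero, add_zero] at hc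
  unfold Real.negMulLog
  have h2 := mul_le_mul_of_nonneg_left hc (by linarith : (0 : ℝ) ≤ 1 - d)
  have h3 : (1 - d) * (d / (1 - d) * Real.log d) = d * Real.log d := by
    have : (1 - d) ≠ 0 := by linarith
    field_simp
  linarith

theorem negMulLog_diff_aux {x d : ℝ} (hx : 0 ≤ x) (hd : 0 ≤ d) (hd2 : d ≤ 1 / 2) (h1 : x + d ≤ 1) :
    |Real.negMulLog (x + d) - Real.negMulLog x| ≤ Real.negMulLog d := by
  rw [abs_le]
  constructor
  · have hf := negMulLog_flip hd hd2
    rcases eq_or_lt_of_le (show x ≤ 1 by linarith) with rfl | hx1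
    · have : d = 0 := by linarith
      subst this; simp
    have hx1' : 0 < 1 - x := by linarith
    have t0 : 0 ≤ d / (1 - x) := by positivity
    have t1 : 0 ≤ 1 - d / (1 - x) := by
      rw [sub_nonneg, div_le_one hx1']; linarith
    have c1 := Real.concaveOn_negMulLog.2 (x := x) (y := 1) hx (by simp : (1:ℝ) ∈ Set.Ici 0) t1 t0 (by ring)
    have c2 := Real.concaveOn_negMulLog.2 (x := x) (y := 1) hx (by simp : (1:ℝ) ∈ Set.Ici 0) t0 t1 (by ring)
    have e1 : (1 - d / (1 - x)) • x + (d / (1 - x)) • (1 : ℝ) = x + d := by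
      simp only [smul_eq_mul]; field_simp; ring
    have e2 : (d / (1 - x)) • x + (1 - d / (1 - x)) • (1 : ℝ) = 1 - d := by
      simp only [smul_eq_mul]; field_simp; ring
    rw [e1] at c1
    rw [e2] at c2
    simp only [smul_eq_mul, Real.negMulLog_one, mul_zero, add_zero] at c1 c2
    linarith
  · rcases hx.eq_or_lt with rfl | hx
    · simp
    rcases hd.eq_or_lt with rfl | hd
    · simp
    unfold Real.negMulLog
    have l1 := Real.log_le_log hx (by linarith : x ≤ x + d)
    have l2 := Real.log_le_log hd (by linarith : d ≤ x + d)
    nlinarith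

theorem negMulLog_diff {x y : ℝ} (hx : 0 ≤ x) (hy : 0 ≤ y) (hx1 : x ≤ 1) (hy1 : y ≤ 1)
    (h : |x - y| ≤ 1 / 2) :
    |Real.negMulLog x - Real.negMulLog y| ≤ Real.negMulLog |x - y| := by
  rcases le_total x y with hxy | hxy
  · have := negMulLog_diff_aux (x := x) (d := y - x) hx (by linarith) (by rw [abs_le] at h; linarith)
      (by linarith)
    rw [abs_sub_comm, abs_sub_comm x y, abs_of_nonneg (sub_nonneg.2 hxy)]
    simpa using this
  · have := negMulLog_diff_aux (x := y) (d := x - y) hy (by linarith) (by rw [abs_le] at h; linarith)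
      (by linarith)
    rw [abs_of_nonneg (sub_nonneg.2 hxy)]
    simpa using this

theorem negMulLog_mono {x y : ℝ} (hx : 0 ≤ x) (hxy : x ≤ y) (hy : y ≤ 1 / 3) :
    Real.negMulLog x ≤ Real.negMulLog y := by
  rcases hx.eq_or_lt with rfl | hx
  · simp only [Real.negMulLog_zero]
    exact Real.negMulLog_nonneg hxy (by linarith)
  have hy0 : 0 < y := by linarith
  have hly : Real.log y ≤ -1 := by
    rw [Real.log_le_iff_le_exp hy0, Real.exp_neg]
    have := Real.exp_one_lt_d9
    refine hy.trans ?_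
    rw [le_inv_comm₀ (by norm_num) (Real.exp_pos _)]
    norm_num at this ⊢
    linarith
  have h1 : Real.log (y / x) ≤ y / x - 1 := Real.log_le_sub_one_of_pos (by positivity)
  rw [Real.log_div hy0.ne' hx.ne'] at h1
  have h2 := mul_le_mul_of_nonneg_left h1 hx.le
  have h3 : x * (y / x - 1) = y - x := by field_simp
  unfold Real.negMulLog
  nlinarith

theorem entropy_head {P q : ℕ → ℝ} {m : ℕ} {a : ℝ} (hm : 2 ≤ m)
    (hP0 : ∀ k, 0 ≤ P k) (hP1 : ∀ k, P k ≤ 1) (hq0 : ∀ k, 0 ≤ q k) (hq1 : ∀ k, q k ≤ 1)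
    (hs : ∑ k ∈ Finset.range (m + 1), |q k - P k| ≤ a) (ha : a ≤ 1 / 2) :
    |∑ k ∈ Finset.range (m + 1), Real.negMulLog (q k) - ∑ k ∈ Finset.range (m + 1), Real.negMulLog (P k)|
      ≤ a * Real.log (((m : ℝ) + 2) / a) := by
  set s := ∑ k ∈ Finset.range (m + 1), |q k - P k| with hsd
  have hs0 : 0 ≤ s := Finset.sum_nonneg (fun _ _ => abs_nonneg _)
  have hmr : (2 : ℝ) ≤ m := by exact_mod_cast hm
  have hM : (0 : ℝ) < (m : ℝ) + 1 := by positivity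
  have step1 : |∑ k ∈ Finset.range (m + 1), Real.negMulLog (q k) - ∑ k ∈ Finset.range (m + 1), Real.negMulLog (P k)|
      ≤ ∑ k ∈ Finset.range (m + 1), Real.negMulLog |q k - P k| := by
    rw [← Finset.sum_sub_distrib]
    refine (Finset.abs_sum_le_sum_abs _ _).trans (Finset.sum_le_sum ?_)
    intro k hk
    apply negMulLog_diff (hq0 k) (hP0 k) (hq1 k) (hP1 k)
    have := Finset.single_le_sum (f := fun k => |q k - P k|) (fun _ _ => abs_nonneg _) hk
    linarith
  have step2 : ∑ k ∈ Finset.range (m + 1), Real.negMulLog |q k - P k|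
      ≤ ((m : ℝ) + 1) * Real.negMulLog (s / ((m : ℝ) + 1)) := by
    have := Real.concaveOn_negMulLog.le_map_sum (t := Finset.range (m + 1))
      (w := fun _ => 1 / ((m : ℝ) + 1)) (p := fun k => |q k - P k|)
      (fun _ _ => by positivity) (by simp; field_simp) (fun k _ => Set.mem_Ici.2 (abs_nonneg (q k - P k)))
    simp only [smul_eq_mul, ← Finset.mul_sum] at this
    rw [← hsd] at this
    rw [one_div, inv_mul_le_iff₀ hM, inv_mul_eq_div] at this
    exact this
  have step3 : Real.negMulLog (s / ((m : ℝ) + 1)) ≤ Real.negMulLog (a / ((m : ℝ) + 1)) := by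
    apply negMulLog_mono (by positivity) (by gcongr)
    rw [div_le_iff₀ hM]
    linarith
  have step4 : ((m : ℝ) + 1) * Real.negMulLog (a / ((m : ℝ) + 1)) ≤ a * Real.log (((m : ℝ) + 2) / a) := by
    rcases (hs0.trans hs).eq_or_lt with h | h
    · simp [← h]
    · have : ((m : ℝ) + 1) * Real.negMulLog (a / ((m : ℝ) + 1)) = a * Real.log (((m : ℝ) + 1) / a) := by
        rw [Real.negMulLog, Real.log_div h.ne' hM.ne', Real.log_div hM.ne' h.ne']
        field_simp
        ring
      rw [this]
      gcongr
      norm_num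
  calc _ ≤ _ := step1
    _ ≤ _ := step2
    _ ≤ ((m : ℝ) + 1) * Real.negMulLog (a / ((m : ℝ) + 1)) := by gcongr
    _ ≤ _ := step4
end ent

section tail
variable {lam : ℝ} {q : ℕ → ℝ}

theorem PoiW.chernoff (H : PoiW lam q) (hq : ∀ k, q k = Real.exp (-lam) * lam ^ k / (Nat.factorial k))
    {n : ℕ} (hn : lam ≤ n) :
    1 - PoiW.S q n ≤ Real.exp (-(lam + (n : ℝ) * Real.log ((n : ℝ) / (lam * Real.exp 1)))) := by
  have hl := H.lam_pos
  have hn0 : (0 : ℝ) < n := by linarith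
  have hexp : HasSum (fun k : ℕ => (n : ℝ) ^ k / (Nat.factorial k)) (Real.exp n) := by
    rw [Real.exp_eq_exp_ℝ]; exact NormedSpace.expSeries_div_hasSum_exp _
  have htail := (hasSum_nat_add_iff' (f := fun k : ℕ => (n : ℝ) ^ k / (Nat.factorial k)) n).2 hexp
  have hle : ∀ k, q (k + n) ≤ (Real.exp (-lam) * (lam / n) ^ n) * ((n : ℝ) ^ (k + n) / (Nat.factorial (k + n))) := by
    intro k
    rw [hq, mul_assoc, mul_div_assoc]
    gcongr
    rw [← mul_div_assoc]
    gcongr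
    have : lam ^ (k + n) = (lam / n) ^ (k + n) * (n : ℝ) ^ (k + n) := by
      rw [← mul_pow]; congr 1; field_simp
    rw [this]
    gcongr ?_ * _
    apply pow_le_pow_of_le_one (by positivity) (by rw [div_le_one hn0]; exact hn) (by omega)
  have h1 := hasSum_le hle (H.hasSum_tail n) (htail.mul_left _)
  refine h1.trans ?_
  have h2 : Real.exp (n : ℝ) - ∑ i ∈ Finset.range n, (n : ℝ) ^ i / (Nat.factorial i) ≤ Real.exp n := by
    have : 0 ≤ ∑ i ∈ Finset.range n, (n : ℝ) ^ i / (Nat.factorial i) :=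
      Finset.sum_nonneg (fun _ _ => by positivity)
    linarith
  refine (mul_le_mul_of_nonneg_left h2 (by positivity)).trans (le_of_eq ?_)
  rw [Real.log_div hn0.ne' (by positivity), Real.log_mul hl.ne' (Real.exp_pos _).ne', Real.log_exp,
    show (lam / n) ^ n = Real.exp (n * (Real.log lam - Real.log n)) by
      rw [mul_comm (n:ℝ), Real.exp_mul, ← Real.log_div hl.ne' hn0.ne', Real.exp_log (by positivity),
        Real.rpow_natCast], ← Real.exp_add, ← Real.exp_add]
  congr 1
  ring

theorem log_fact_le (k : ℕ) : Real.log (Nat.factorial k) ≤ (k : ℝ) * (k - 1) / 2 := by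
  induction k with
  | zero => simp
  | succ k ih =>
    rw [Nat.factorial_succ]
    push_cast
    rw [Real.log_mul (by positivity) (by positivity)]
    have := Real.log_le_sub_one_of_pos (by positivity : (0 : ℝ) < (k : ℝ) + 1)
    linarith

theorem PoiW.tail_entropy (H : PoiW lam q)
    (hq : ∀ k, q k = Real.exp (-lam) * lam ^ k / (Nat.factorial k)) {n : ℕ} (hn : lam ≤ n) :
    Summable (fun k => Real.negMulLog (q k)) ∧
    0 ≤ ∑' k, Real.negMulLog (q (k + (n + 2))) ∧
    ∑' k, Real.negMulLog (q (k + (n + 2))) ≤ (max (lam * Real.log (Real.exp 1 / lam)) 0 + lam ^ 2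
          + (6 * Real.log (2 * Real.pi) + 1) / 12)
        * Real.exp (-(lam + (n : ℝ) * Real.log ((n : ℝ) / (lam * Real.exp 1)))) := by
  have hl := H.lam_pos
  have hq1 : ∀ k, q k ≤ 1 := fun k => by
    have := H.S_le_one (k + 1)
    have := H.S_nonneg k
    have := PoiW.S_succ (q := q) k
    linarith
  have hnn : ∀ k, 0 ≤ Real.negMulLog (q k) := fun k => Real.negMulLog_nonneg (H.pos k).le (hq1 k)
  have hle : ∀ k, Real.negMulLog (q (k + (n + 2))) ≤
      lam * q (k + (n + 2)) + (lam * (-Real.log lam)) * q (k + (n + 1)) + lam ^ 2 * q (k + n) := by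
    intro k
    have r1 := H.recq (k + (n + 1))
    have r2 := H.recq (k + n)
    rw [show k + (n + 1) + 1 = k + (n + 2) from rfl] at r1
    rw [show k + n + 1 = k + (n + 1) from rfl] at r2
    have hf := log_fact_le (k + (n + 2))
    have hlog : Real.log (q (k + (n + 2))) = -lam + (k + (n + 2) : ℕ) * Real.log lam
        - Real.log (Nat.factorial (k + (n + 2))) := by
      rw [hq, Real.log_div (by positivity) (by positivity), Real.log_mul (by positivity) (by positivity),
        Real.log_exp, Real.log_pow]
    rw [Real.negMulLog, hlog]
    set Q := q (k + (n + 2))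
    have hQ : 0 < Q := H.pos _
    push_cast at *
    have h1 := mul_le_mul_of_nonneg_left hf hQ.le
    have r3 : lam ^ 2 * q (k + n) = Q * (((k:ℝ) + (n + 2)) * ((k + (n + 2)) - 1)) := by
      calc lam ^ 2 * q (k + n) = lam * (lam * q (k + n)) := by ring
        _ = ((k:ℝ) + n + 1) * (lam * q (k + (n + 1))) := by rw [← r2]; ring
        _ = _ := by rw [← r1]; ring
    have r4 : lam * q (k + (n + 1)) = Q * ((k:ℝ) + (n + 2)) := by rw [← r1]; ring
    have r5 : 0 ≤ Q * (((k:ℝ) + (n + 2)) * ((k + (n + 2)) - 1)) := by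
      apply mul_nonneg hQ.le (mul_nonneg (by positivity) _)
      have : (0:ℝ) ≤ k := by positivity
      have : (0:ℝ) ≤ n := by positivity
      linarith
    rw [r3, show lam * -Real.log lam * q (k + (n + 1)) = -Real.log lam * (lam * q (k + (n+1))) by ring, r4]
    linarith
  have hsum := (((H.hasSum_tail (n + 2)).mul_left lam).add
    ((H.hasSum_tail (n + 1)).mul_left (lam * (-Real.log lam)))).add ((H.hasSum_tail n).mul_left (lam ^ 2))
  have hs1 : Summable (fun k => Real.negMulLog (q (k + (n + 2)))) :=
    Summable.of_nonneg_of_le (fun k => hnn _) hle hsum.summable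
  refine ⟨(summable_nat_add_iff (n + 2)).1 hs1, tsum_nonneg (fun k => hnn _), ?_⟩
  refine (hasSum_le hle hs1.hasSum hsum).trans ?_
  have hch := H.chernoff hq hn
  set E := Real.exp (-(lam + (n : ℝ) * Real.log ((n : ℝ) / (lam * Real.exp 1))))
  have e1 : Real.log (Real.exp 1 / lam) = 1 - Real.log lam := by
    rw [Real.log_div (Real.exp_pos _).ne' hl.ne', Real.log_exp]
  rw [e1]
  have s1 := PoiW.S_succ (q := q) n
  have s2 := PoiW.S_succ (q := q) (n + 1)
  have p1 := H.pos n
  have p2 := H.pos (n + 1)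
  have hR1 : 0 ≤ 1 - PoiW.S q (n + 1) := sub_nonneg.2 (H.S_le_one _)
  have hE : 0 < E := Real.exp_pos _
  have hlog0 : 0 ≤ Real.log (2 * Real.pi) := Real.log_nonneg (by have := Real.pi_gt_three; linarith)
  have m1 : lam * (1 - PoiW.S q (n + 2)) ≤ lam * (1 - PoiW.S q (n + 1)) := by
    apply mul_le_mul_of_nonneg_left _ hl.le
    linarith
  have m2 : (lam * (1 - Real.log lam)) * (1 - PoiW.S q (n + 1)) ≤ max (lam * (1 - Real.log lam)) 0 * E := by
    calc _ ≤ max (lam * (1 - Real.log lam)) 0 * (1 - PoiW.S q (n + 1)) := by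
          gcongr; exact le_max_left _ _
      _ ≤ _ := by
          apply mul_le_mul_of_nonneg_left _ (le_max_right _ _)
          linarith
  have m3 : lam ^ 2 * (1 - PoiW.S q n) ≤ lam ^ 2 * E := by gcongr
  have m4 : 0 ≤ (6 * Real.log (2 * Real.pi) + 1) / 12 * E := by positivity
  linarith

end tail

section chenstein

theorem lip_of_diff {f : ℕ → ℝ} {D : ℝ} (hd : ∀ j, |f (j + 2) - f (j + 1)| ≤ D) (i k : ℕ) :
    |f (i + k + 1) - f (i + 1)| ≤ D * k := by
  induction k with
  | zero => simp
  | succ k ih =>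
    have h1 := hd (i + k)
    have h2 := abs_sub_le (f (i + (k + 1) + 1)) (f (i + k + 1)) (f (i + 1))
    rw [show i + (k + 1) + 1 = i + k + 2 by ring] at h2 ⊢
    push_cast
    linarith

variable {Ω ι : Type*} [mΩ : MeasurableSpace Ω] [Fintype ι] [DecidableEq ι]

theorem integrable_bdd (μ : Measure Ω) [IsProbabilityMeasure μ] {g : Ω → ℝ} (hg : Measurable g) (C : ℝ)
    (hC : ∀ ω, |g ω| ≤ C) : Integrable g μ :=
  Integrable.of_bound hg.aestronglyMeasurable C (Filter.Eventually.of_forall (by simpa using hC))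

theorem bern_integral (μ : Measure Ω) [IsProbabilityMeasure μ] {X : Ω → ℝ} {p : ℝ}
    (h : IsBernoulli μ X p) (hp : 0 < p) : ∫ ω, X ω ∂μ = p := by
  have e : X = Set.indicator {ω | X ω = 1} (fun _ => (1 : ℝ)) := by
    ext ω
    rcases h.2.1 ω with h0 | h0 <;> simp [Set.indicator, h0]
  have hm : MeasurableSet {ω | X ω = 1} := h.1 (measurableSet_singleton 1)
  rw [e, integral_indicator hm]
  simp [measureReal_def, h.2.2, hp.le]

theorem genOutside_le (X : ι → Ω → ℝ) (hX : ∀ β, Measurable (X β)) (B : Set ι) :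
    genOutside X B ≤ mΩ :=
  Measurable.comap_le (measurable_pi_lambda _ (fun β => hX β))

theorem genOutside_measurable (X : ι → Ω → ℝ) (B : Set ι) {β : ι} (hβ : β ∉ B) :
    Measurable[genOutside X B] (X β) := by
  have h1 : Measurable[genOutside X B] (fun ω => fun β : ((Set.univ \ B : Set ι)) => X β ω) :=
    comap_measurable _
  have hmem : β ∈ (Set.univ \ B : Set ι) := by simpa using hβ
  exact (measurable_pi_apply (⟨β, hmem⟩ : (Set.univ \ B : Set ι))).comp h1

theorem chen_stein_one (μ : Measure Ω) [IsProbabilityMeasure μ]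
    (X : ι → Ω → ℝ) (p : ι → ℝ) (B : ι → Finset ι)
    (hBern : ∀ α, IsBernoulli μ (X α) (p α))
    (hp_pos : ∀ α, 0 < p α)
    (hB : ∀ α, α ∈ B α) {f : ℕ → ℝ} {C D : ℝ} (hf : ∀ j, |f (j + 1)| ≤ C)
    (hd : ∀ j, |f (j + 2) - f (j + 1)| ≤ D) (Y : ι → Ω → ℕ) (hYm : ∀ α, Measurable (Y α))
    (hY : ∀ α ω, (Y α ω : ℝ) = X α ω) (α : ι) :
    |∫ ω, (p α * f (∑ β, Y β ω + 1) - X α ω * f (∑ β, Y β ω)) ∂μ| ≤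
      D * (∑ β ∈ B α, p α * p β) + D * (∑ β ∈ B α \ {α}, ∫ ω, X α ω * X β ω ∂μ) +
      C * ∫ ω, |(μ[(fun ω' => X α ω' - p α) | genOutside X (↑(B α) : Set ι)]) ω| ∂μ := by
  have hC0 : 0 ≤ C := (abs_nonneg _).trans (hf 0)
  have hD0 : 0 ≤ D := (abs_nonneg _).trans (hd 0)
  have hXm : ∀ β, Measurable (X β) := fun β => (hBern β).1
  have hX0 : ∀ β ω, 0 ≤ X β ω := fun β ω => by rcases (hBern β).2.1 ω with h | h <;> simp [h]
  have hX1 : ∀ β ω, X β ω ≤ 1 := fun β ω => by rcases (hBern β).2.1 ω with h | h <;> simp [h]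
  have hXi : ∀ β, Integrable (X β) μ := fun β =>
    integrable_bdd μ (hXm β) 1 (fun ω => by rw [abs_of_nonneg (hX0 β ω)]; exact hX1 β ω)
  have hXXi : ∀ β, Integrable (fun ω => X α ω * X β ω) μ := fun β =>
    integrable_bdd μ ((hXm α).mul (hXm β)) 1 (fun ω => by
      rw [abs_of_nonneg (mul_nonneg (hX0 α ω) (hX0 β ω))]
      exact mul_le_one₀ (hX1 α ω) (hX0 β ω) (hX1 β ω))
  set V : Ω → ℕ := fun ω => ∑ β ∈ (B α)ᶜ, Y β ω with hV
  have hfm : Measurable f := measurable_from_top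
  have hNm : Measurable (fun ω => ∑ β, Y β ω) := Finset.measurable_sum _ (fun β _ => hYm β)
  have hVm : Measurable V := Finset.measurable_sum _ (fun β _ => hYm β)
  have hNsplit : ∀ ω, ∑ β, Y β ω = V ω + ∑ β ∈ B α, Y β ω := fun ω => by
    rw [hV, add_comm]; exact (Finset.sum_add_sum_compl (B α) (fun β => Y β ω)).symm
  have hBsplit : ∀ ω, ∑ β ∈ B α, Y β ω = Y α ω + ∑ β ∈ B α \ {α}, Y β ω := fun ω => by
    rw [Finset.sdiff_singleton_eq_erase, Finset.add_sum_erase _ (fun β => Y β ω) (hB α)]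
  -- the pointwise bound
  have hfN1 : Measurable (fun ω => f (∑ β, Y β ω + 1)) := hfm.comp (hNm.add_const 1)
  have hfV1 : Measurable (fun ω => f (V ω + 1)) := hfm.comp (hVm.add_const 1)
  have hfN : Measurable (fun ω => f (∑ β, Y β ω)) := hfm.comp hNm
  set g1 : Ω → ℝ := fun ω => p α * (f (∑ β, Y β ω + 1) - f (V ω + 1)) + X α ω * (f (V ω + 1) - f (∑ β, Y β ω)) with hg1
  set g2 : Ω → ℝ := fun ω => (X α ω - p α) * f (V ω + 1) with hg2
  have hpt : ∀ ω, |g1 ω| ≤ ∑ β ∈ B α, D * p α * X β ω + ∑ β ∈ B α \ {α}, D * (X α ω * X β ω) := by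
    intro ω
    refine (abs_add_le _ _).trans (add_le_add ?_ ?_)
    · rw [abs_mul, abs_of_pos (hp_pos α), hNsplit]
      have := lip_of_diff hd (V ω) (∑ β ∈ B α, Y β ω)
      push_cast [hY] at this
      rw [← Finset.mul_sum]
      have h2 := mul_le_mul_of_nonneg_left this (hp_pos α).le
      linarith
    · rcases (hBern α).2.1 ω with h | h
      · simp [h]
      · have hYα : Y α ω = 1 := by have := hY α ω; rw [h] at this; exact_mod_cast this
        rw [h, hNsplit, hBsplit, hYα]
        have := lip_of_diff hd (V ω) (∑ β ∈ B α \ {α}, Y β ω)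
        push_cast [hY] at this
        rw [← Finset.mul_sum, one_mul, abs_sub_comm]
        simp only [one_mul]
        rw [show V ω + (1 + ∑ β ∈ B α \ {α}, Y β ω) = V ω + ∑ β ∈ B α \ {α}, Y β ω + 1 by ring]
        exact this
  have hbi : Integrable (fun ω => ∑ β ∈ B α, D * p α * X β ω + ∑ β ∈ B α \ {α}, D * (X α ω * X β ω)) μ :=
    (integrable_finsetSum _ (fun β _ => (hXi β).const_mul _)).add
      (integrable_finsetSum _ (fun β _ => (hXXi β).const_mul _))
  have hg1m : Measurable g1 := ((hfN1.sub hfV1).const_mul _).add ((hXm α).mul (hfV1.sub hfN))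
  have hg1i : Integrable g1 μ := hbi.mono' hg1m.aestronglyMeasurable (Filter.Eventually.of_forall hpt)
  have hXpi : Integrable (fun ω => X α ω - p α) μ := (hXi α).sub (integrable_const _)
  have hg2i : Integrable g2 μ := by
    refine Integrable.mul_bdd (c := C) hXpi hfV1.aestronglyMeasurable (Filter.Eventually.of_forall fun ω => hf _)
  have hI1 : |∫ ω, g1 ω ∂μ| ≤ D * (∑ β ∈ B α, p α * p β) + D * (∑ β ∈ B α \ {α}, ∫ ω, X α ω * X β ω ∂μ) := by
    refine (abs_integral_le_integral_abs).trans ((integral_mono hg1i.abs hbi hpt).trans (le_of_eq ?_))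
    rw [integral_add (integrable_finsetSum _ (fun β _ => (hXi β).const_mul _))
      (integrable_finsetSum _ (fun β _ => (hXXi β).const_mul _)),
      integral_finsetSum _ (fun β _ => (hXi β).const_mul _),
      integral_finsetSum _ (fun β _ => (hXXi β).const_mul _)]
    simp only [integral_const_mul, bern_integral μ (hBern _) (hp_pos _), Finset.mul_sum, mul_assoc]
  have hI2 : |∫ ω, g2 ω ∂μ| ≤ C * ∫ ω, |(μ[(fun ω' => X α ω' - p α) | genOutside X (↑(B α) : Set ι)]) ω| ∂μ := by
    set G := genOutside X (↑(B α) : Set ι) with hG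
    have hGle : G ≤ mΩ := @genOutside_le Ω ι mΩ _ _ X hXm _
    have hYG : ∀ β ∈ (B α)ᶜ, Measurable[G] (Y β) := by
      intro β hβ
      have hXG : Measurable[G] (X β) := by
        exact @genOutside_measurable Ω ι mΩ _ _ X _ β (by simpa using hβ)
      have : Y β = fun ω => ⌊X β ω⌋₊ := by
        ext ω; rw [← hY]; simp
      rw [this]
      exact Nat.measurable_floor.comp hXG
    have hVG : Measurable[G] V := Finset.measurable_sum _ hYG
    have hfVG : StronglyMeasurable[G] (fun ω => f (V ω + 1)) :=
      (hfm.comp ((measurable_from_top (f := fun n : ℕ => n + 1)).comp hVG)).stronglyMeasurable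
    have hce : μ[g2 | G] =ᵐ[μ] μ[fun ω => X α ω - p α | G] * fun ω => f (V ω + 1) := condExp_mul_of_stronglyMeasurable_right (μ := μ) (m := G) (f := fun ω => X α ω - p α) hfVG hg2i hXpi
    rw [← integral_condExp hGle (f := g2), integral_congr_ae hce, ← integral_const_mul]
    refine (abs_integral_le_integral_abs).trans ?_
    refine integral_mono_of_nonneg (Filter.Eventually.of_forall fun _ => abs_nonneg _)
      ((integrable_condExp.abs).const_mul _) (Filter.Eventually.of_forall fun ω => ?_)
    simp only [Pi.mul_apply, abs_mul]
    rw [mul_comm]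
    exact mul_le_mul_of_nonneg_right (hf _) (abs_nonneg _)
  have hsplit : ∫ ω, (p α * f (∑ β, Y β ω + 1) - X α ω * f (∑ β, Y β ω)) ∂μ
      = ∫ ω, g1 ω ∂μ - ∫ ω, g2 ω ∂μ := by
    rw [← integral_sub hg1i hg2i]
    congr 1
    ext ω
    simp only [hg1, hg2]
    ring
  rw [hsplit]
  exact (abs_sub _ _).trans (add_le_add hI1 hI2)

theorem chen_stein (μ : Measure Ω) [IsProbabilityMeasure μ]
    (X : ι → Ω → ℝ) (p : ι → ℝ) (B : ι → Finset ι)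
    (hBern : ∀ α, IsBernoulli μ (X α) (p α))
    (hp_pos : ∀ α, 0 < p α)
    (hB : ∀ α, α ∈ B α) {f : ℕ → ℝ} {C D : ℝ} (hf : ∀ j, |f (j + 1)| ≤ C)
    (hd : ∀ j, |f (j + 2) - f (j + 1)| ≤ D) (Y : ι → Ω → ℕ) (hYm : ∀ α, Measurable (Y α))
    (hY : ∀ α ω, (Y α ω : ℝ) = X α ω) (hf0 : |f 0| ≤ C) :
    |∫ ω, ((∑ α, p α) * f (∑ β, Y β ω + 1) - ((∑ β, Y β ω : ℕ) : ℝ) * f (∑ β, Y β ω)) ∂μ| ≤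
      D * (∑ α, ∑ β ∈ B α, p α * p β + ∑ α, ∑ β ∈ B α \ {α}, ∫ ω, X α ω * X β ω ∂μ) +
      C * ∑ α, ∫ ω, |(μ[(fun ω' => X α ω' - p α) | genOutside X (↑(B α) : Set ι)]) ω| ∂μ := by
  have hf' : ∀ j, |f j| ≤ C := fun j => by cases j; exacts [hf0, hf _]
  have hC0 : 0 ≤ C := (abs_nonneg _).trans hf0
  have hfm : Measurable f := measurable_from_top
  have hNm : Measurable (fun ω => ∑ β, Y β ω) := Finset.measurable_sum _ (fun β _ => hYm β)
  have hfN1 : Measurable (fun ω => f (∑ β, Y β ω + 1)) := hfm.comp (hNm.add_const 1)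
  have hfN : Measurable (fun ω => f (∑ β, Y β ω)) := hfm.comp hNm
  have hX : ∀ β ω, |X β ω| ≤ 1 := fun β ω => by rcases (hBern β).2.1 ω with h | h <;> simp [h]
  have hi : ∀ α, Integrable (fun ω => p α * f (∑ β, Y β ω + 1) - X α ω * f (∑ β, Y β ω)) μ := by
    intro α
    refine ((integrable_bdd μ hfN1 C (fun ω => hf' _)).const_mul _).sub ?_
    refine integrable_bdd μ ((hBern α).1.mul hfN) (1 * C) (fun ω => ?_)
    rw [abs_mul]
    exact mul_le_mul (hX _ _) (hf' _) (abs_nonneg _) zero_le_one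
  have e : ∀ ω, ((∑ α, p α) * f (∑ β, Y β ω + 1) - ((∑ β, Y β ω : ℕ) : ℝ) * f (∑ β, Y β ω))
      = ∑ α, (p α * f (∑ β, Y β ω + 1) - X α ω * f (∑ β, Y β ω)) := fun ω => by
    push_cast [hY]
    rw [Finset.sum_sub_distrib, Finset.sum_mul, Finset.sum_mul]
  simp_rw [e]
  rw [integral_finsetSum _ (fun α _ => hi α)]
  refine (Finset.abs_sum_le_sum_abs _ _).trans ((Finset.sum_le_sum fun α _ =>
    chen_stein_one μ X p B hBern hp_pos hB hf hd Y hYm hY α).trans (le_of_eq ?_))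
  rw [Finset.sum_add_distrib, Finset.sum_add_distrib, ← Finset.mul_sum, ← Finset.mul_sum, ← Finset.mul_sum]
  ring

end chenstein

theorem poiW_poisson {lam : ℝ} (hl : 0 < lam) : PoiW lam (_root_.poissonPMF lam) where
  lam_pos := hl
  pos k := by unfold _root_.poissonPMF; positivity
  hasSum := by
    have hexp : HasSum (fun k : ℕ => lam ^ k / (Nat.factorial k)) (Real.exp lam) := by
      rw [Real.exp_eq_exp_ℝ]; exact NormedSpace.expSeries_div_hasSum_exp _
    have := hexp.mul_left (Real.exp (-lam))
    rw [← Real.exp_add, neg_add_cancel, Real.exp_zero] at this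
    refine this.congr_fun ?_
    intro k
    simp [_root_.poissonPMF, mul_div_assoc]
  recq k := by
    unfold _root_.poissonPMF
    rw [Nat.factorial_succ]
    push_cast
    field_simp
    ring

section law
variable {Ω : Type*} [MeasurableSpace Ω]

theorem integral_law (μ : Measure Ω) [IsProbabilityMeasure μ] (N : Ω → ℕ) (hN : Measurable N)
    (m : ℕ) (hm : ∀ ω, N ω ≤ m) (h : ℕ → ℝ) :
    ∫ ω, h (N ω) ∂μ = ∑ k ∈ Finset.range (m + 1), h k * (μ {ω | N ω = k}).toReal := by
  have e : ∀ ω, h (N ω) = ∑ k ∈ Finset.range (m + 1), h k * Set.indicator {ω | N ω = k} (fun _ => (1 : ℝ)) ω := by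
    intro ω
    rw [Finset.sum_eq_single (N ω)]
    · simp
    · intro k _ hk
      simp [Set.indicator, hk.symm]
    · intro h'
      exact absurd (Finset.mem_range.2 (Nat.lt_succ_of_le (hm ω))) h'
  have hms : ∀ k, MeasurableSet {ω | N ω = k} := fun k => hN (measurableSet_singleton k)
  simp_rw [e]
  rw [integral_finsetSum _ (fun k _ => ((integrable_const (1 : ℝ)).indicator (hms k)).const_mul _)]
  refine Finset.sum_congr rfl fun k _ => ?_
  rw [integral_const_mul, integral_indicator (hms k)]
  simp [measureReal_def]

end law

/-- **Main theorem: Poisson approximation of the entropy of dependent Bernoulli sums.**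
Let `I` be a finite index set with `m = |I|`, `X α` Bernoulli with `p α = P(X α = 1) > 0`,
`W = ∑ α, X α`, `λ = ∑ α, p α ∈ (0, ∞)`, and `B α ∋ α` neighborhoods of dependence, with
Chen–Stein coefficients `b₁, b₂, b₃`.  Let
`a(λ) = 2[(b₁ + b₂)(1 − e^{−λ})/λ + b₃ min{1, 1.4/√λ}]` and
`b(λ) = [max{λ log(e/λ), 0} + λ² + (6 log(2π) + 1)/12] · exp{−[λ + (m−1) log((m−1)/(λe))]}`.
If `a(λ) ≤ 1/2` and `λ ≤ m − 1`, then for `Z ∼ Po(λ)`,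
`|H(Z) − H(W)| ≤ a(λ) log((m + 2)/a(λ)) + b(λ)`. -/
theorem entropy_poisson_approximation_dependent
    {Ω ι : Type*} [MeasurableSpace Ω] [Fintype ι] [DecidableEq ι]
    (μ : Measure Ω) [IsProbabilityMeasure μ]
    (X : ι → Ω → ℝ) (p : ι → ℝ) (B : ι → Finset ι)
    (hBern : ∀ α, IsBernoulli μ (X α) (p α))
    (hp_pos : ∀ α, 0 < p α)
    (hB : ∀ α, α ∈ B α)
    (m : ℕ) (hm : m = Fintype.card ι)
    (lam b1 b2 b3 a b : ℝ)
    (hlam : lam = ∑ α, p α)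
    (hlam_pos : 0 < lam)
    (hb1 : b1 = ∑ α, ∑ β ∈ B α, p α * p β)
    (hb2 : b2 = ∑ α, ∑ β ∈ B α \ {α}, ∫ ω, X α ω * X β ω ∂μ)
    (hb3 : b3 = ∑ α, ∫ ω,
        |(μ[(fun ω' => X α ω' - p α) | genOutside X (↑(B α) : Set ι)]) ω| ∂μ)
    (ha : a = 2 * ((b1 + b2) * ((1 - Real.exp (-lam)) / lam)
        + b3 * min 1 (1.4 / Real.sqrt lam)))
    (hb : b = (max (lam * Real.log (Real.exp 1 / lam)) 0 + lam ^ 2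
          + (6 * Real.log (2 * Real.pi) + 1) / 12)
        * Real.exp (-(lam + ((m : ℝ) - 1) * Real.log (((m : ℝ) - 1) / (lam * Real.exp 1)))))
    (ha_le : a ≤ 1 / 2)
    (hlam_le : lam ≤ (m : ℝ) - 1) :
    |entropyPMF (poissonPMF lam) - entropyPMF (pmfOf μ (fun ω => ∑ α, X α ω))|
      ≤ a * Real.log (((m : ℝ) + 2) / a) + b := by
  classical
  have H := poiW_poisson hlam_pos
  have hq : ∀ k, _root_.poissonPMF lam k = Real.exp (-lam) * lam ^ k / (Nat.factorial k) := fun k => rfl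
  set q := _root_.poissonPMF lam with hqdef
  set P := pmfOf μ (fun ω => ∑ α, X α ω) with hPdef
  -- size of m
  have hm2 : 2 ≤ m := by
    by_contra hcon
    have : (m : ℝ) ≤ 1 := by exact_mod_cast (by omega : m ≤ 1)
    linarith
  obtain ⟨n, hn⟩ : ∃ n, m = n + 1 := ⟨m - 1, by omega⟩
  have hnr : (m : ℝ) - 1 = n := by rw [hn]; push_cast; ring
  -- integer versions
  set Y : ι → Ω → ℕ := fun α ω => ⌊X α ω⌋₊ with hYdef
  have hYm : ∀ α, Measurable (Y α) := fun α => Nat.measurable_floor.comp (hBern α).1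
  have hY : ∀ α ω, (Y α ω : ℝ) = X α ω := fun α ω => by
    rcases (hBern α).2.1 ω with h | h <;> simp [hYdef, h]
  have hNm : Measurable (fun ω => ∑ β, Y β ω) := Finset.measurable_sum _ (fun β _ => hYm β)
  have hNle : ∀ ω, ∑ β, Y β ω ≤ m := fun ω => by
    rw [hm]
    calc ∑ β, Y β ω ≤ ∑ β : ι, 1 := Finset.sum_le_sum fun β _ => by
          rcases (hBern β).2.1 ω with h | h <;> simp [hYdef, h]
      _ = Fintype.card ι := by simp
  have hPN : ∀ k, P k = (μ {ω | ∑ β, Y β ω = k}).toReal := fun k => by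
    rw [hPdef, pmfOf]
    congr 2
    ext ω
    simp only [Set.mem_ofPred_eq]
    rw [← Nat.cast_inj (R := ℝ)]
    push_cast [hY]
    rfl
  have hP0 : ∀ k, 0 ≤ P k := fun k => ENNReal.toReal_nonneg
  have hP1 : ∀ k, P k ≤ 1 := fun k => by
    have : μ.real {ω | (∑ α, X α ω) = (k : ℝ)} ≤ 1 := measureReal_le_one
    exact this
  have hPz : ∀ k, k ∉ Finset.range (m + 1) → P k = 0 := fun k hk => by
    rw [hPN]
    have : {ω | ∑ β, Y β ω = k} = ∅ := by
      ext ω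
      have := hNle ω
      simp only [Finset.mem_range] at hk
      simp only [Set.mem_ofPred_eq, Set.mem_empty_iff_false, iff_false]
      omega
    simp [this]
  have hlaw : ∀ h : ℕ → ℝ, ∫ ω, h (∑ β, Y β ω) ∂μ = ∑ k ∈ Finset.range (m + 1), h k * P k := fun h => by
    rw [integral_law μ _ hNm m hNle h]
    simp_rw [hPN]
  have hPsum : ∑ k ∈ Finset.range (m + 1), P k = 1 := by
    have := hlaw (fun _ => 1)
    simpa using this.symm
  have hq1 : ∀ k, q k ≤ 1 := fun k => by
    have := H.S_le_one (k + 1)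
    have := H.S_nonneg k
    have := PoiW.S_succ (q := q) k
    linarith
  -- total variation
  set h : ℕ → ℝ := fun k => if k ∈ Finset.range (m + 1) ∧ q k ≤ P k then 1 else 0 with hh
  have h0 : ∀ k, 0 ≤ h k := fun k => by simp only [hh]; split_ifs <;> norm_num
  have h1 : ∀ k, h k ≤ 1 := fun k => by simp only [hh]; split_ifs <;> norm_num
  set c := ∑ k ∈ Finset.range (m + 1), h k * q k with hcdef
  have hc : HasSum (fun k => h k * q k) c :=
    hasSum_sum_of_ne_finset_zero (fun k hk => by
      have : h k = 0 := by simp only [hh]; rw [if_neg (fun h => hk h.1)]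
      rw [this, zero_mul])
  have hTV : ∑ k ∈ Finset.range (m + 1), h k * P k - c ≤ a / 2 := by
    have hf := fun j => H.f_bound hq h0 h1 hc j
    have hd := fun j => H.f_diff h0 h1 hc j
    have hcs := chen_stein μ X p B hBern hp_pos hB hf hd Y hYm hY (by
      have : (0 : ℝ) ≤ min 1 (1.4 / √lam) := (abs_nonneg _).trans (hf 0)
      simpa [PoiW.f] using this)
    rw [← hlam, ← hb1, ← hb2, ← hb3] at hcs
    simp_rw [H.stein_eq] at hcs
    have hint : Integrable (fun ω => h (∑ β, Y β ω)) μ :=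
      integrable_bdd μ ((measurable_from_top (f := h)).comp hNm) 1 (fun ω => by
        rw [abs_of_nonneg (h0 _)]; exact h1 _)
    rw [integral_sub hint (integrable_const _), hlaw] at hcs
    have hq0 : q 0 = Real.exp (-lam) := by simp [hq]
    rw [hq0] at hcs
    simp only [integral_const, probReal_univ, smul_eq_mul, one_mul] at hcs
    have := (le_abs_self _).trans hcs
    rw [ha]
    linarith
  have hs : ∑ k ∈ Finset.range (m + 1), |q k - P k| ≤ a := by
    have e : ∑ k ∈ Finset.range (m + 1), |q k - P k|
        = 2 * (∑ k ∈ Finset.range (m + 1), h k * P k - c)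
          - (∑ k ∈ Finset.range (m + 1), P k - ∑ k ∈ Finset.range (m + 1), q k) := by
      rw [hcdef, ← Finset.sum_sub_distrib, ← Finset.sum_sub_distrib, Finset.mul_sum, ← Finset.sum_sub_distrib]
      refine Finset.sum_congr rfl fun k hk => ?_
      by_cases hqP : q k ≤ P k
      · simp only [hh, if_pos (And.intro hk hqP)]
        rw [abs_of_nonpos (by linarith)]; ring
      · simp only [hh, if_neg (fun h : k ∈ Finset.range (m + 1) ∧ q k ≤ P k => hqP h.2)]
        rw [abs_of_nonneg (by linarith)]; ring
    have := H.S_le_one (m + 1)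
    rw [PoiW.S] at this
    rw [e, hPsum]
    linarith
  have hhead := entropy_head hm2 hP0 hP1 (fun k => (H.pos k).le) hq1 hs ha_le
  obtain ⟨hsm, ht0, ht1⟩ := H.tail_entropy hq (n := n) (by rw [← hnr]; exact hlam_le)
  rw [← hnr, ← hb] at ht1
  rw [show n + 2 = m + 1 by omega] at ht0 ht1
  have eZ : entropyPMF q = ∑ k ∈ Finset.range (m + 1), Real.negMulLog (q k)
      + ∑' k, Real.negMulLog (q (k + (m + 1))) := (hsm.sum_add_tsum_nat_add (m + 1)).symm
  have eW : entropyPMF P = ∑ k ∈ Finset.range (m + 1), Real.negMulLog (P k) := by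
    rw [entropyPMF]
    exact tsum_eq_sum (fun k hk => by rw [hPz k hk, Real.negMulLog_zero])
  rw [eZ, eW]
  rw [abs_le] at hhead ⊢
  constructor <;> linarith
end
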